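/- arXiv:1710.04731 — 3 statements merged into one kernel-verified Lean document; each statement's English description precedes it below -/
import Mathlib

section
/- Let a > 0, c ≥ 0, R ≥ 0 and define S(c,a,R) = {(r,v) ∈ ℝ² : r + (max(v+c,0))²/(2a) ≤ R and −r + (max(c−v,0))²/(2a) ≤ R}. Then every (r,v) ∈ S(c,a,R) satisfies c − 2√(aR) ≤ v ≤ 2√(aR) − c; in particular the relative speed of any state in the controlled-invariant set is bounded by |v| ≤ 2√(aR) − c. -/
/-- The analytic controlled-invariant set (tracking error bound set), bounded by two
parabolic curves: `S(c,a,R) = {(r,v) : r + (max(v+c,0))²/(2a) ≤ R ∧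
−r + (max(c−v,0))²/(2a) ≤ R}`. -/
def Spar (c a R : ℝ) : Set (ℝ × ℝ) :=
  {p : ℝ × ℝ | p.1 + max (p.2 + c) 0 ^ 2 / (2 * a) ≤ R ∧
               -p.1 + max (c - p.2) 0 ^ 2 / (2 * a) ≤ R}

/-- Every state `(r,v)` in the controlled-invariant set `S(c,a,R)` has its relative
velocity confined to `c − 2√(aR) ≤ v ≤ 2√(aR) − c`; in particular `|v| ≤ 2√(aR) − c`. -/
theorem TEB_velocity_bound (a c R : ℝ) (ha : 0 < a) (hc : 0 ≤ c) (hR : 0 ≤ R) :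
    ∀ r v : ℝ, (r, v) ∈ Spar c a R →
      (c - 2 * Real.sqrt (a * R) ≤ v ∧ v ≤ 2 * Real.sqrt (a * R) - c) ∧
      |v| ≤ 2 * Real.sqrt (a * R) - c := by
  rintro r v ⟨h₁, h₂⟩
  dsimp only at h₁ h₂
  -- Adding the two parabolic constraints eliminates the position `r`.
  have hsum : max (v + c) 0 ^ 2 + max (c - v) 0 ^ 2 ≤ 4 * (a * R) := by
    have h : (max (v + c) 0 ^ 2 + max (c - v) 0 ^ 2) / (2 * a) ≤ 2 * R := by
      rw [add_div]; linarith
    rw [div_le_iff₀ (by positivity)] at h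
    linarith
  -- Hence each square separately is at most `4aR = (2√(aR))²`.
  have hs : Real.sqrt (a * R) ^ 2 = a * R := Real.sq_sqrt (by positivity)
  have hpos : 0 ≤ 2 * Real.sqrt (a * R) := by positivity
  have hu : max (v + c) 0 ≤ 2 * Real.sqrt (a * R) :=
    le_of_abs_le <| abs_le_of_sq_le_sq (by nlinarith [sq_nonneg (max (c - v) 0)]) hpos
  have hl : max (c - v) 0 ≤ 2 * Real.sqrt (a * R) :=
    le_of_abs_le <| abs_le_of_sq_le_sq (by nlinarith [sq_nonneg (max (v + c) 0)]) hpos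
  have hu' := (le_max_left (v + c) 0).trans hu
  have hl' := (le_max_left (c - v) 0).trans hl
  exact ⟨⟨by linarith, by linarith⟩, abs_le.mpr ⟨by linarith, by linarith⟩⟩
end

section
/- Let u_max > D_a ≥ 0, a = u_max − D_a, and c ≥ 0, and define S(c,a,R) = {(r,v) ∈ ℝ² : r + (max(v+c,0))²/(2a) ≤ R and −r + (max(c−v,0))²/(2a) ≤ R}. Then: (i) (0,0) ∈ S(c,a,R) if and only if R ≥ c²/(2a); and (ii) under the worst-case disturbance signals w(t) ≡ −c and d(t) ≡ −D_a, for every measurable control u : [0,∞) → ℝ with |u(t)| ≤ u_max, the solution of ṙ = v − w, v̇ = u − d starting from (r,v)(0) = (0,0) satisfies r(c/a) ≥ c²/(2a). Consequently no guaranteed position tracking bound smaller than c²/(2a) is achievable, so the minimal tracking error bound equals c²/(2a) and grows quadratically with the planner's maximum speed (since c is the sum of the planner's maximum speed and the velocity disturbance bound). -/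
/-!
The origin satisfies both inequalities defining `Spar c a R` exactly when `c² / (2a) ≤ R`, since
`max c 0 = c`. For the lower bound on `r`, admissible controls give `u + D_a ≥ -u_max + D_a = -a`,
so `v t ≥ -a t`, and integrating `v + c ≥ c - a s` over `[0, c/a]`, i.e. up to the stopping time of
the hardest braking manoeuvre, yields `r (c/a) ≥ c²/a - c²/(2a) = c²/(2a)`.
Because the Bochner integral of a non-integrable function is `0`, monotonicity of the integral
needs integrability of `u` (bounded and measurable) and of `v` (continuous, being a primitive).
-/

open MeasureTheory in
/-- A measurable function bounded on `[0, ∞)` is integrable on `[0, T]`. -/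
lemma integrableOn_Icc_of_abs_le {u : ℝ → ℝ} {M : ℝ} (hum : Measurable u)
    (hub : ∀ t, 0 ≤ t → |u t| ≤ M) (T : ℝ) : IntegrableOn u (Set.Icc 0 T) := by
  refine Measure.integrableOn_of_bounded (M := M) measure_Icc_lt_top.ne
    hum.aestronglyMeasurable ?_
  filter_upwards [ae_restrict_mem measurableSet_Icc] with t ht
  exact hub t ht.1


/-- (i) the origin lies in `S(c,a,R)` iff `R ≥ c²/(2a)`; (ii) under the worst-case
disturbances `w ≡ −c`, `d ≡ −D_a`, every admissible control, starting from `(0,0)`,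
yields `r(c/a) ≥ c²/(2a)`.  Hence no guaranteed position tracking bound smaller than
`c²/(2a)` is achievable: the minimal TEB equals `c²/(2a)`, quadratic in the planner's
maximum speed. -/
theorem minimal_TEB_quadratic_in_speed
    (u_max D_a a c : ℝ)
    (hD : 0 ≤ D_a) (hu : D_a < u_max) (ha : a = u_max - D_a) (hc : 0 ≤ c) :
    (∀ R : ℝ, ((0, 0) ∈ Spar c a R ↔ c ^ 2 / (2 * a) ≤ R)) ∧
    (∀ u : ℝ → ℝ, Measurable u → (∀ t, 0 ≤ t → |u t| ≤ u_max) →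
      ∀ r v : ℝ → ℝ, r 0 = 0 → v 0 = 0 →
        (∀ t, 0 ≤ t → r t = ∫ s in (0:ℝ)..t, (v s - (-c))) →
        (∀ t, 0 ≤ t → v t = ∫ s in (0:ℝ)..t, (u s - (-D_a))) →
        c ^ 2 / (2 * a) ≤ r (c / a)) := by
  have ha0 : 0 < a := by linarith
  refine ⟨fun R => by simp [Spar, hc], ?_⟩
  intro u hum hub r v _ _ hr hv
  have hT : 0 ≤ c / a := by positivity
  have hui : ∀ T, MeasureTheory.IntegrableOn (fun s => u s - (-D_a)) (Set.Icc 0 T) := fun T =>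
    (integrableOn_Icc_of_abs_le hum hub T).sub continuous_const.continuousOn.integrableOn_Icc
  have hvlow : ∀ t, 0 ≤ t → -a * t ≤ v t := by
    intro t ht
    rw [hv t ht]
    have h : ∫ _ in (0:ℝ)..t, (-a) ≤ ∫ s in (0:ℝ)..t, (u s - (-D_a)) := by
      refine intervalIntegral.integral_mono_on ht (by simp)
        ((intervalIntegrable_iff_integrableOn_Icc_of_le ht).2 (hui t)) ?_
      intro s hs
      have := (abs_le.1 (hub s hs.1)).1
      linarith
    rw [intervalIntegral.integral_const, smul_eq_mul] at h
    linarith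
  have hvc : ContinuousOn v (Set.uIcc 0 (c / a)) := by
    refine ContinuousOn.congr (intervalIntegral.continuousOn_primitive_interval
      (f := fun s => u s - (-D_a)) (μ := MeasureTheory.volume) ?_) ?_
    · rw [Set.uIcc_of_le hT]
      exact hui _
    · intro t ht
      rw [Set.uIcc_of_le hT] at ht
      exact hv t ht.1
  have h : ∫ s in (0:ℝ)..(c / a), (c - a * s) ≤ ∫ s in (0:ℝ)..(c / a), (v s - (-c)) := by
    refine intervalIntegral.integral_mono_on hT
      (Continuous.intervalIntegrable (by fun_prop) _ _)
      (hvc.sub continuousOn_const).intervalIntegrable ?_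
    intro s hs
    linarith [hvlow s hs.1]
  have hval : ∫ s in (0:ℝ)..(c / a), (c - a * s) = c ^ 2 / (2 * a) := by
    rw [intervalIntegral.integral_sub (by simp)
      (Continuous.intervalIntegrable (by fun_prop) _ _),
      intervalIntegral.integral_const, intervalIntegral.integral_const_mul, integral_id]
    simp only [smul_eq_mul]
    field_simp
    ring
  rw [hr _ hT, ← hval]
  exact h
end

section
/- Let v, R > 0 and consider a Dubins car with dynamics ẋ(t) = v·cos θ(t), ẏ(t) = v·sin θ(t), θ̇(t) = ω(t), where ω : [0,T] → ℝ is measurable with |ω(t)| ≤ v/R for all t (minimum turning radius R). Suppose the car starts on the circle of radius R centered at the origin with tangent heading: x(0)² + y(0)² = R² and x(0)·cos θ(0) + y(0)·sin θ(0) = 0. Then for every t ∈ (0,T] with x(t)² + y(t)² < R², there exists s ∈ (0,t) with x(s)² + y(s)² > R². That is, the car cannot reduce its distance to the origin below R without first exiting the closed disk of radius R. -/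
/-!
Write `p = (x, y)`, `e = (cos θ, sin θ)` and let `u = p · e` be the radial component of the motion,
so that `(|p|²)' = 2 v u`. Formally `u' = v + ω (p · e^⊥)`, and as long as `|p| ≤ R` the second
summand is at least `-(v / R) R = -v`. Hence `u` is nondecreasing while the car stays in the disk.
The tangent heading gives `u 0 = 0`, so `u ≥ 0`, so `|p|²` is nondecreasing and never drops
below `R²`: a car that never leaves the closed disk never enters its interior.

Since `ω` is merely measurable, `u` need not be differentiable. The inequality `u' ≥ 0` is used only
as a bound on the right lower Dini derivative (`radial_nonneg`), which follows from the Lipschitz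
bound on `θ` through the splitting
`u b - u a = (p b - p a) · e b + p a · (e b - e a)`.
-/

open Set Filter Topology

/-- Cauchy–Schwarz together with the fact that a chord of the unit circle is shorter than its arc. -/
lemma abs_inner_chord_le {X Y R α β : ℝ} (hR : 0 < R) (h : X ^ 2 + Y ^ 2 ≤ R ^ 2) :
    |X * (Real.cos β - Real.cos α) + Y * (Real.sin β - Real.sin α)| ≤ R * |β - α| := by
  have hc := Real.one_sub_sq_div_two_le_cos (x := β - α)
  rw [Real.cos_sub] at hc
  have h1 := Real.sin_sq_add_cos_sq α
  have h2 := Real.sin_sq_add_cos_sq β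
  set c := Real.cos β - Real.cos α with hcdef
  set s := Real.sin β - Real.sin α with hsdef
  have hcs : c ^ 2 + s ^ 2 ≤ (β - α) ^ 2 := by
    rw [hcdef, hsdef]; nlinarith
  have h3 : (X * c + Y * s) ^ 2 ≤ (R * |β - α|) ^ 2 := by
    rw [mul_pow, sq_abs]
    calc (X * c + Y * s) ^ 2 ≤ (X ^ 2 + Y ^ 2) * (c ^ 2 + s ^ 2) := by
          nlinarith [sq_nonneg (X * s - Y * c)]
      _ ≤ R ^ 2 * (β - α) ^ 2 := by gcongr
  exact abs_le_of_sq_le_sq h3 (by positivity)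

/-- While the car stays in the closed disk of radius `R`, its radial velocity stays nonnegative
once it starts from zero. -/
lemma radial_nonneg {v R t : ℝ} (hR : 0 < R) {X Y Θ : ℝ → ℝ}
    (hX : ∀ s, HasDerivAt X (v * Real.cos (Θ s)) s)
    (hY : ∀ s, HasDerivAt Y (v * Real.sin (Θ s)) s)
    (hΘ : Continuous Θ)
    (hlip : ∀ a b, 0 ≤ a → a ≤ b → b ≤ t → |Θ b - Θ a| ≤ v / R * (b - a))
    (hin : ∀ s ∈ Icc 0 t, X s ^ 2 + Y s ^ 2 ≤ R ^ 2)
    (h0 : X 0 * Real.cos (Θ 0) + Y 0 * Real.sin (Θ 0) = 0) :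
    ∀ s ∈ Icc 0 t, 0 ≤ X s * Real.cos (Θ s) + Y s * Real.sin (Θ s) := by
  have hXc : Continuous X := continuous_iff_continuousAt.2 fun s => (hX s).continuousAt
  have hYc : Continuous Y := continuous_iff_continuousAt.2 fun s => (hY s).continuousAt
  intro s hs
  have key := image_le_of_liminf_slope_right_le_deriv_boundary
    (f := fun s => -(X s * Real.cos (Θ s) + Y s * Real.sin (Θ s)))
    (a := 0) (b := t) (B := fun _ => 0) (B' := fun _ => 0)
    (by fun_prop) (by simp [h0]) continuousOn_const
    (fun x _ => hasDerivWithinAt_const _ _ _) ?_ hs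
  · exact neg_nonpos.1 key
  intro a ha r hr
  apply Eventually.frequently
  -- the slope of `u` at `a` is at least `(slope p) · e b - v`, which tends to `v - v = 0`
  have hlim : Tendsto (fun b => v - (slope X a b * Real.cos (Θ b) + slope Y a b * Real.sin (Θ b)))
      (𝓝[>] a) (𝓝 0) := by
    have hx := (hasDerivAt_iff_tendsto_slope.1 (hX a)).mono_left
      (nhdsWithin_mono a (fun b hb => ne_of_gt hb : Ioi a ⊆ {a}ᶜ))
    have hy := (hasDerivAt_iff_tendsto_slope.1 (hY a)).mono_left
      (nhdsWithin_mono a (fun b hb => ne_of_gt hb : Ioi a ⊆ {a}ᶜ))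
    have hc : Tendsto (fun b => Real.cos (Θ b)) (𝓝[>] a) (𝓝 (Real.cos (Θ a))) :=
      ((Real.continuous_cos.comp hΘ).tendsto a).mono_left nhdsWithin_le_nhds
    have hs : Tendsto (fun b => Real.sin (Θ b)) (𝓝[>] a) (𝓝 (Real.sin (Θ a))) :=
      ((Real.continuous_sin.comp hΘ).tendsto a).mono_left nhdsWithin_le_nhds
    convert tendsto_const_nhds.sub ((hx.mul hc).add (hy.mul hs)) using 2
    linear_combination v * Real.sin_sq_add_cos_sq (Θ a)
  filter_upwards [hlim.eventually (gt_mem_nhds hr), Ioc_mem_nhdsGT ha.2] with b hb hab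
  refine lt_of_le_of_lt ?_ hb
  have hpos : 0 < b - a := sub_pos.2 hab.1
  have h1 := abs_inner_chord_le (α := Θ a) (β := Θ b) hR (hin a ⟨ha.1, ha.2.le⟩)
  have h2 := mul_le_mul_of_nonneg_left (hlip a b ha.1 hab.1.le hab.2) hR.le
  have h3 : R * (v / R * (b - a)) = v * (b - a) := by field_simp
  have h4 := (abs_le.1 (h1.trans (h2.trans h3.le))).1
  simp only [slope_def_field]
  rw [div_le_iff₀ hpos]
  have h5 : (v - ((X b - X a) / (b - a) * Real.cos (Θ b) + (Y b - Y a) / (b - a) * Real.sin (Θ b)))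
      * (b - a) = v * (b - a) - ((X b - X a) * Real.cos (Θ b) + (Y b - Y a) * Real.sin (Θ b)) := by
    field_simp
  rw [h5]
  linarith


/-- A Dubins car `ẋ = v cos θ`, `ẏ = v sin θ`, `θ̇ = ω` with speed `v`, turn rate bound
`|ω| ≤ v/R` (minimum turning radius `R`), starting on the circle of radius `R` about the
origin with tangent heading, cannot reduce its distance to the origin below `R` without
first exiting the closed disk of radius `R`: if at some time `t ∈ (0,T]` it is strictly
inside the disk, then at some earlier time `s ∈ (0,t)` it was strictly outside. -/
theorem dubins_must_exit_before_approaching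
    (v R T : ℝ) (hv : 0 < v) (hR : 0 < R) (hT : 0 ≤ T)
    (ω : ℝ → ℝ) (hω_meas : Measurable ω)
    (hω : ∀ t ∈ Set.Icc (0 : ℝ) T, |ω t| ≤ v / R)
    (x y θ : ℝ → ℝ)
    (hx : ∀ t ∈ Set.Icc (0 : ℝ) T, x t = x 0 + ∫ s in (0:ℝ)..t, v * Real.cos (θ s))
    (hy : ∀ t ∈ Set.Icc (0 : ℝ) T, y t = y 0 + ∫ s in (0:ℝ)..t, v * Real.sin (θ s))
    (hθ : ∀ t ∈ Set.Icc (0 : ℝ) T, θ t = θ 0 + ∫ s in (0:ℝ)..t, ω s)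
    (hinit : x 0 ^ 2 + y 0 ^ 2 = R ^ 2)
    (htangent : x 0 * Real.cos (θ 0) + y 0 * Real.sin (θ 0) = 0) :
    ∀ t, 0 < t → t ≤ T → x t ^ 2 + y t ^ 2 < R ^ 2 →
      ∃ s, 0 < s ∧ s < t ∧ x s ^ 2 + y s ^ 2 > R ^ 2 := by
  intro t ht0 htT hlt
  by_contra! hcon
  have hint : ∀ a b, 0 ≤ a → a ≤ b → b ≤ T → IntervalIntegrable ω MeasureTheory.volume a b := by
    intro a b ha hab hb
    refine (intervalIntegrable_const (c := v / R)).mono_fun hω_meas.aestronglyMeasurable ?_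
    refine (MeasureTheory.ae_restrict_iff' measurableSet_uIoc).2 (.of_forall fun s hs => ?_)
    rw [uIoc_of_le hab] at hs
    exact (hω s ⟨ha.trans hs.1.le, hs.2.trans hb⟩).trans (le_abs_self _)
  have hlip : ∀ a b, 0 ≤ a → a ≤ b → b ≤ T → |θ b - θ a| ≤ v / R * (b - a) := by
    intro a b ha hab hb
    have h1 : θ b - θ a = ∫ s in a..b, ω s := by
      rw [hθ b ⟨ha.trans hab, hb⟩, hθ a ⟨ha, hab.trans hb⟩,
        ← intervalIntegral.integral_interval_sub_left (hint 0 b le_rfl (ha.trans hab) hb)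
          (hint 0 a le_rfl ha (hab.trans hb))]
      ring
    rw [h1, ← abs_of_nonneg (sub_nonneg.2 hab), ← Real.norm_eq_abs]
    refine intervalIntegral.norm_integral_le_of_norm_le_const fun s hs => ?_
    rw [uIoc_of_le hab] at hs
    exact hω s ⟨ha.trans hs.1.le, hs.2.trans hb⟩
  have hcont : ContinuousOn θ (Icc 0 T) := by
    refine (LipschitzOnWith.of_dist_le_mul (K := (v / R).toNNReal) fun a ha b hb => ?_).continuousOn
    rw [Real.coe_toNNReal _ (by positivity), Real.dist_eq, Real.dist_eq]
    rcases le_total a b with h | h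
    · rw [abs_sub_comm, abs_sub_comm a, abs_of_nonneg (sub_nonneg.2 h)]
      exact hlip a b ha.1 h hb.2
    · rw [abs_of_nonneg (sub_nonneg.2 h)]
      exact hlip b a hb.1 h ha.2
  -- `x`, `y`, `θ` are arbitrary outside `[0, T]`; extend the trajectory to the whole line
  set Θ : ℝ → ℝ := IccExtend hT ((Icc 0 T).domRestrict θ) with hΘdef
  have hΘc : Continuous Θ := hcont.domRestrict.Icc_extend'
  have hΘ : ∀ s ∈ Icc 0 T, Θ s = θ s := fun s hs => by
    rw [hΘdef, IccExtend_of_mem hT _ hs]; rfl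
  set X : ℝ → ℝ := fun s => x 0 + ∫ τ in (0:ℝ)..s, v * Real.cos (Θ τ) with hXdef
  set Y : ℝ → ℝ := fun s => y 0 + ∫ τ in (0:ℝ)..s, v * Real.sin (Θ τ) with hYdef
  have hXx : ∀ s ∈ Icc 0 T, X s = x s := fun s hs => by
    rw [hx s hs, hXdef]
    refine congrArg (x 0 + ·) (intervalIntegral.integral_congr fun τ hτ => ?_)
    rw [uIcc_of_le hs.1] at hτ
    simp only [hΘ τ ⟨hτ.1, hτ.2.trans hs.2⟩]
  have hYy : ∀ s ∈ Icc 0 T, Y s = y s := fun s hs => by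
    rw [hy s hs, hYdef]
    refine congrArg (y 0 + ·) (intervalIntegral.integral_congr fun τ hτ => ?_)
    rw [uIcc_of_le hs.1] at hτ
    simp only [hΘ τ ⟨hτ.1, hτ.2.trans hs.2⟩]
  have hX' : ∀ s, HasDerivAt X (v * Real.cos (Θ s)) s := fun s =>
    ((by fun_prop : Continuous fun τ => v * Real.cos (Θ τ)).integral_hasStrictDerivAt
      0 s).hasDerivAt.const_add _
  have hY' : ∀ s, HasDerivAt Y (v * Real.sin (Θ s)) s := fun s =>
    ((by fun_prop : Continuous fun τ => v * Real.sin (Θ τ)).integral_hasStrictDerivAt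
      0 s).hasDerivAt.const_add _
  have h0T : (0 : ℝ) ∈ Icc 0 T := ⟨le_rfl, hT⟩
  have hu := radial_nonneg (t := t) hR hX' hY' hΘc
    (fun a b ha hab hb => by
      rw [hΘ b ⟨ha.trans hab, hb.trans htT⟩, hΘ a ⟨ha, hab.trans (hb.trans htT)⟩]
      exact hlip a b ha hab (hb.trans htT))
    (fun s hs => by
      rw [hXx s ⟨hs.1, hs.2.trans htT⟩, hYy s ⟨hs.1, hs.2.trans htT⟩]
      rcases hs.1.eq_or_lt with rfl | h0
      · exact hinit.le
      rcases hs.2.eq_or_lt with rfl | h1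
      · exact hlt.le
      exact hcon s h0 h1)
    (by rw [hXx 0 h0T, hYy 0 h0T, hΘ 0 h0T, htangent])
  have hq : ∀ s, HasDerivAt (fun s => X s ^ 2 + Y s ^ 2)
      (2 * v * (X s * Real.cos (Θ s) + Y s * Real.sin (Θ s))) s := fun s =>
    (((hX' s).pow 2).add ((hY' s).pow 2)).congr_deriv (by push_cast; ring)
  have hmono : MonotoneOn (fun s => X s ^ 2 + Y s ^ 2) (Icc 0 t) := by
    refine monotoneOn_of_hasDerivWithinAt_nonneg (convex_Icc 0 t)
      (fun s _ => (hq s).continuousAt.continuousWithinAt)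
      (fun s _ => (hq s).hasDerivWithinAt) fun s hs => ?_
    exact mul_nonneg (by positivity) (hu s (interior_subset hs))
  have := hmono ⟨le_rfl, ht0.le⟩ ⟨ht0.le, le_rfl⟩ ht0.le
  simp only [hXx 0 h0T, hYy 0 h0T, hXx t ⟨ht0.le, htT⟩, hYy t ⟨ht0.le, htT⟩] at this
  linarith
end
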